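/- For every irrational real number θ, the intersection S_θ ∩ S_{−θ} equals {1}. -/

import Mathlib

/-- For an irrational `θ`, `Sθ θ` is the set of positive integers `q` such that
`⌈qθ⌉/q < ⌈q'θ⌉/q'` for every positive integer `q' < q`. -/
def Sθ (θ : ℝ) : Set ℕ :=
  {q | 0 < q ∧ ∀ q' : ℕ, 0 < q' → q' < q →
    (⌈(q : ℝ) * θ⌉ : ℝ) / (q : ℝ) < (⌈(q' : ℝ) * θ⌉ : ℝ) / (q' : ℝ)}

/-- Purely integral core: some `x < q` has a multiple of `q` in `[x(p-1), xp]`. -/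
theorem exists_int_mul_between (p q : ℤ) (hq : 2 ≤ q) :
    ∃ x k : ℤ, 0 < x ∧ x < q ∧ x * (p - 1) ≤ k * q ∧ k * q ≤ x * p := by
  by_cases h : IsCoprime p q
  · obtain ⟨a, b, hab⟩ := h
    have hdiv := Int.emod_add_mul_ediv a q
    have h0 := Int.emod_nonneg a (show q ≠ 0 by omega)
    have h1 := Int.emod_lt_of_pos a (show 0 < q by omega)
    set x := a % q
    have hx : x ≠ 0 := by
      intro hx
      have : q ∣ 1 := ⟨(a / q) * p + b, by rw [← hab]; nth_rewrite 1 [← hdiv]; rw [hx]; ring⟩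
      have := Int.le_of_dvd one_pos this
      omega
    have key : x * p = -(a / q * p + b) * q + 1 := by
      have : x = a - q * (a / q) := by linarith
      rw [this]; linear_combination hab
    refine ⟨x, -(a / q * p + b), by omega, h1, ?_, by omega⟩
    have : x * (p - 1) = x * p - x := by ring
    omega
  · rw [Int.isCoprime_iff_gcd_eq_one] at h
    obtain ⟨u, hu⟩ := Int.gcd_dvd_left p q
    obtain ⟨v, hv⟩ := Int.gcd_dvd_right p q
    have hg : 2 ≤ (Int.gcd p q : ℤ) := by
      have : Int.gcd p q ≠ 0 := by
        intro h0; rw [h0] at hv; simp at hv; omega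
      omega
    generalize (Int.gcd p q : ℤ) = g at *
    have hv0 : 0 < v := by
      by_contra hc
      nlinarith
    refine ⟨v, u, hv0, by nlinarith, ?_, ?_⟩
    · rw [hu, hv]; nlinarith
    · rw [hu, hv]; nlinarith

/-- For every irrational `θ`, `S_θ ∩ S_{-θ} = {1}`. -/
theorem Sθ_inter_neg (θ : ℝ) (hθ : Irrational θ) :
    Sθ θ ∩ Sθ (-θ) = {1} := by
  ext q
  simp only [Set.mem_inter_iff, Set.mem_singleton_iff]
  constructor
  · rintro ⟨⟨hq, h1⟩, ⟨-, h2⟩⟩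
    by_contra hne
    obtain ⟨x, k, hx0, hxq, hk1, hk2⟩ :=
      exists_int_mul_between ⌈(q : ℝ) * θ⌉ q (by omega)
    lift x to ℕ using hx0.le
    have hx0' : 0 < x := by exact_mod_cast hx0
    have hxq' : x < q := by exact_mod_cast hxq
    have a1 := h1 x hx0' hxq'
    have a2 := h2 x hx0' hxq'
    have hxr : (0 : ℝ) < x := by exact_mod_cast hx0'
    have hqr : (0 : ℝ) < q := by exact_mod_cast hq
    rw [div_lt_div_iff₀ hqr hxr] at a1 a2
    simp only [mul_neg, Int.ceil_neg] at a2
    have b1 : ⌈(q : ℝ) * θ⌉ * (x : ℤ) < ⌈(x : ℝ) * θ⌉ * q := by exact_mod_cast a1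
    have b2 : -⌊(q : ℝ) * θ⌋ * (x : ℤ) < -⌊(x : ℝ) * θ⌋ * q := by exact_mod_cast a2
    have c1 := Int.ceil_le_floor_add_one ((x : ℝ) * θ)
    have c2 : ⌊(q : ℝ) * θ⌋ < ⌈(q : ℝ) * θ⌉ := by
      have hirr : Irrational ((q : ℝ) * θ) := hθ.natCast_mul hq.ne'
      have : (⌊(q : ℝ) * θ⌋ : ℝ) < (q : ℝ) * θ :=
        lt_of_le_of_ne (Int.floor_le _) (fun h => hirr.ne_int _ h.symm)
      exact_mod_cast this.trans_le (Int.le_ceil _)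
    generalize ⌈(q : ℝ) * θ⌉ = p at *
    generalize ⌊(q : ℝ) * θ⌋ = f at *
    generalize ⌈(x : ℝ) * θ⌉ = c at *
    generalize ⌊(x : ℝ) * θ⌋ = m at *
    have hqz : (0 : ℤ) < q := by exact_mod_cast hq
    have d1 : k < c := by
      refine lt_of_mul_lt_mul_right (a := (q : ℤ)) ?_ hqz.le
      linarith
    have d2 : m < k := by
      refine lt_of_mul_lt_mul_right (a := (q : ℤ)) ?_ hqz.le
      have : (x : ℤ) * f ≤ x * (p - 1) :=
        mul_le_mul_of_nonneg_left (by omega) hx0.le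
      linarith
    omega
  · rintro rfl
    exact ⟨⟨one_pos, fun _ _ _ => by omega⟩, ⟨one_pos, fun _ _ _ => by omega⟩⟩
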